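/- Let δ > 0 and N > 0. There is a constant C = C(N, δ, ω, ω₀) such that the following holds for all real Q ≥ 1: if r ∈ ℤ² satisfies Q^{1/2}/2 ≤ |r| ≤ Q^{1/2}, k, q ∈ ℕ satisfy kq ≤ Q, and w ∈ ℝ² satisfies kq(Q|w·r| + 1) ≤ Q^{1−δ}, then | p_{2,r,k,q}(w) − (c Q^{1/2}/|r|) · ω̂₀( (Q^{3/2}/|r|) (w·r^⊥) ) | ≤ C Q^{−N}, where ω̂₀(t) = ∫_ℝ ω₀(x) e(−xt) dx is the Fourier transform of ω₀. -/

import Mathlib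

open MeasureTheory Real Matrix Finset

noncomputable section

/-- `e(x) = exp(2πix)`. -/
def e2pi (x : ℝ) : ℂ := Complex.exp (2 * Real.pi * Complex.I * x)

/-- Euclidean norm on `ℝ²`. -/
def nrm2 (x : ℝ × ℝ) : ℝ := Real.sqrt (x.1 ^ 2 + x.2 ^ 2)

/-- Dot product on `ℝ²`. -/
def dot2 (x y : ℝ × ℝ) : ℝ := x.1 * y.1 + x.2 * y.2

/-- `x^⊥ = (x₂, -x₁)`. -/
def perp2 (x : ℝ × ℝ) : ℝ × ℝ := (x.2, -x.1)

/-- `δ_n` for `n ∈ ℤ²`. -/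
def deltaInt (n : ℤ × ℤ) : ℂ := if n = 0 then 1 else 0

/-- `h(y,z) = Σ_{j ≥ 1} (1/(yj)) (ω(yj) − ω(|z|/(yj)))`. -/
def hFun (ω : ℝ → ℝ) (y z : ℝ) : ℝ :=
  ∑' j : ℕ+, (1 / (y * ((j : ℕ) : ℝ))) *
    (ω (y * ((j : ℕ) : ℝ)) - ω (|z| / (y * ((j : ℕ) : ℝ))))

/-- `c = (∫_{ℝ²} ω(|x|) dx)⁻¹`. -/
def cConst (ω : ℝ → ℝ) : ℝ := (∫ x : ℝ × ℝ, ω (nrm2 x))⁻¹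

/-- The function `p_{1,q}`. -/
def p1 (ω ω₀ : ℝ → ℝ) (Q : ℝ) (q : ℕ) (w : ℝ × ℝ) : ℂ :=
  -(cConst ω / Q : ℝ) * ∫ x : ℝ × ℝ,
    (((ω₀ (nrm2 x / Q ^ ((3 : ℝ) / 2)) *
      ∑' j : ℕ+, (1 / ((q : ℝ) * ((j : ℕ) : ℝ)) ^ 2) *
        ω (nrm2 x / (((j : ℕ) : ℝ) * (q : ℝ) * Q ^ ((1 : ℝ) / 2)))) : ℝ) : ℂ) *
      e2pi (-(dot2 w x))

/-- The function `p_{2,r,k,q}` (with `q` allowed to be a real parameter). -/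
def p2 (ω ω₀ : ℝ → ℝ) (Q : ℝ) (r : ℤ × ℤ) (k : ℕ) (q : ℝ) (w : ℝ × ℝ) : ℂ :=
  ((cConst ω / Q ^ 3 : ℝ) : ℂ) * ∫ x : ℝ × ℝ,
    (((ω₀ (nrm2 x / Q ^ ((3 : ℝ) / 2)) *
      hFun ω ((k : ℝ) * q / Q) (((r.1 : ℝ) * x.1 + (r.2 : ℝ) * x.2) / Q ^ 2)) : ℝ) : ℂ) *
      e2pi (-(dot2 w x))

/-- The lattice `Λ(a,q) = {k a + q y}` as a subset of `ℤ²`. -/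
def Lambda (a : ℤ × ℤ) (q : ℕ) : Set (ℤ × ℤ) :=
  {v | ∃ k : ℤ, ∃ y : ℤ × ℤ, v = (k * a.1 + (q : ℤ) * y.1, k * a.2 + (q : ℤ) * y.2)}

/-- `k(r) = gcd(r₁,r₂)/gcd(gcd(r₁,r₂),q)`. -/
def kOf (r : ℤ × ℤ) (q : ℕ) : ℕ := Int.gcd r.1 r.2 / Nat.gcd (Int.gcd r.1 r.2) q

/-- The function `p_{Λ(a,q)}`. -/
def pLambda (ω ω₀ : ℝ → ℝ) (Q : ℝ) (q : ℕ) (a : ℤ × ℤ) (w : ℝ × ℝ) : ℂ :=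
  p1 ω ω₀ Q q w +
    ∑' r : ℤ × ℤ,
      Set.indicator {r : ℤ × ℤ | r ∈ Lambda a q ∧ r ≠ 0}
        (fun r => ((ω (nrm2 ((r.1 : ℝ), (r.2 : ℝ)) / Q ^ ((1 : ℝ) / 2)) : ℝ) : ℂ) *
          p2 ω ω₀ Q r (kOf r q) (q : ℝ) w) r

/-- Reduced residues `a mod q` (canonical representatives) with `gcd(a₁,a₂,q)=1`. -/
def residues (q : ℕ) : Finset (ℕ × ℕ) :=
  ((Finset.range q) ×ˢ (Finset.range q)).filter (fun a => Nat.gcd (Nat.gcd a.1 a.2) q = 1)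

/-- Normalized directional derivative along `ξ`. -/
def dirDeriv (ξ : ℝ × ℝ) (f : ℝ × ℝ → ℂ) : ℝ × ℝ → ℂ :=
  fun w => fderiv ℝ f w (ξ.1 / nrm2 ξ, ξ.2 / nrm2 ξ)

/-- Fourier transform `ω̂₀(t) = ∫ ω₀(x) e(−xt) dx`. -/
def fourierW0 (ω₀ : ℝ → ℝ) (t : ℝ) : ℂ := ∫ x : ℝ, ((ω₀ x : ℝ) : ℂ) * e2pi (-(x * t))

/-- `|M(w)x|` for the 3×2 matrix `M(w)`. -/
def Mnorm (Q : ℝ) (w : ℝ × ℝ) (x : ℝ × ℝ) : ℝ :=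
  Real.sqrt (x.1 ^ 2 / Q + x.2 ^ 2 / Q + Q ^ 2 * (w.1 * x.2 - w.2 * x.1) ^ 2)

/-- `μ_{M(w)}(Λ(a,q))`: infimum of `|M(w)x|` over nonzero lattice points. -/
def muM (Q : ℝ) (w : ℝ × ℝ) (a : ℤ × ℤ) (q : ℕ) : ℝ :=
  sInf {t : ℝ | ∃ v : ℤ × ℤ, v ∈ Lambda a q ∧ v ≠ 0 ∧ t = Mnorm Q w ((v.1 : ℝ), (v.2 : ℝ))}

/-- Quadratic form attached to an integer matrix, over any commutative ring. -/
def quadEval {s : ℕ} {R : Type*} [CommRing R] (M : Matrix (Fin s) (Fin s) ℤ)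
    (x : Fin s → R) : R :=
  ∑ i, ∑ j, (M i j : R) * x i * x j

/-- `e_q(n) = exp(2πin/q)` for an integer `n`. -/
def eqc (q : ℕ) (n : ℤ) : ℂ := e2pi ((n : ℝ) / (q : ℝ))

/-- The exponential sum `D_q(u)`. -/
def Dq (s : ℕ) (M₁ M₂ : Matrix (Fin s) (Fin s) ℤ) (q : ℕ) (u : Fin s → ℤ) : ℂ :=
  ∑ a ∈ residues q, ∑ b ∈ Fintype.piFinset (fun _ : Fin s => Finset.range q),
    eqc q ((a.1 : ℤ) * quadEval M₁ (fun i => (b i : ℤ)) +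
      (a.2 : ℤ) * quadEval M₂ (fun i => (b i : ℤ)) + ∑ i, (b i : ℤ) * u i)

/-- The exponential sum `S_{q,dc}(u)`. -/
def Sq (s : ℕ) (M₁ M₂ : Matrix (Fin s) (Fin s) ℤ) (q d : ℕ) (c : ℤ × ℤ)
    (u : Fin s → ℤ) : ℂ :=
  ∑ a ∈ (residues q).filter
      (fun a => (q : ℤ) ∣ (d : ℤ) * (c.1 * (a.2 : ℤ) - c.2 * (a.1 : ℤ))),
    ∑ b ∈ Fintype.piFinset (fun _ : Fin s => Finset.range q),
      eqc q ((a.1 : ℤ) * quadEval M₁ (fun i => (b i : ℤ)) +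
        (a.2 : ℤ) * quadEval M₂ (fun i => (b i : ℤ)) + ∑ i, (b i : ℤ) * u i)

/-- The pair of quadratic forms given by `M₁, M₂` is nonsingular: at every nonzero
complex common zero the gradients (equivalently `M₁x`, `M₂x`) are linearly independent. -/
def NonsingularPair (s : ℕ) (M₁ M₂ : Matrix (Fin s) (Fin s) ℤ) : Prop :=
  ∀ x : Fin s → ℂ, x ≠ 0 →
    quadEval M₁ x = 0 → quadEval M₂ x = 0 →
    LinearIndependent ℂ
      ![(M₁.map (fun z : ℤ => (z : ℂ))).mulVec x, (M₂.map (fun z : ℤ => (z : ℂ))).mulVec x]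

/-- Euclidean norm on `Fin m → ℝ`. -/
def enorm' {m : ℕ} (v : Fin m → ℝ) : ℝ := Real.sqrt (∑ i, v i ^ 2)

end

open scoped FourierTransform

/-- Integer sample sums of a smooth compactly supported function approximate its integral. -/
theorem norm_tsum_int_sub_integral_le {M : ℕ} (hM : 2 ≤ M) {g : ℝ → ℂ}
    (hg : ContDiff ℝ (⊤ : ℕ∞) g) (hc : HasCompactSupport g) :
    ‖∑' j : ℤ, g j - ∫ x, g x‖ ≤
      (∑' m : ℤ, (|(m : ℝ)| ^ M)⁻¹) * ∫ x, ‖iteratedDeriv M g x‖ := by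
  have hint : ∀ n : ℕ, Integrable (iteratedDeriv n g) := fun n => by
    refine Continuous.integrable_of_hasCompactSupport
      (hg.continuous_iteratedDeriv n (by exact_mod_cast le_top)) ?_
    have := hc.iteratedFDeriv (𝕜 := ℝ) n
    rw [iteratedDeriv_eq_equiv_comp]
    exact this.comp_left (by simp)
  set I := ∫ x, ‖iteratedDeriv M g x‖ with hI
  have hI0 : 0 ≤ I := integral_nonneg fun _ => norm_nonneg _
  have hbound : ∀ m : ℤ, m ≠ 0 → ‖𝓕 g (m : ℝ)‖ ≤ (|(m : ℝ)| ^ M)⁻¹ * I := by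
    intro m hm
    have h1 := congrFun (Real.fourier_iteratedDeriv (N := ⊤) (n := M) hg
      (fun n _ => hint n) le_top) (m : ℝ)
    have h2 : ‖𝓕 (iteratedDeriv M g) (m : ℝ)‖ ≤ I :=
      VectorFourier.norm_fourierIntegral_le_integral_norm _ _ _ _ _
    rw [h1, norm_smul] at h2
    have hm' : (1 : ℝ) ≤ |(m : ℝ)| := by exact_mod_cast Int.one_le_abs hm
    have h3 : |(m : ℝ)| ^ M ≤ ‖(2 * π * Complex.I * ((m : ℝ) : ℂ)) ^ M‖ := by
      rw [norm_pow]
      refine pow_le_pow_left₀ (abs_nonneg _) ?_ _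
      simp only [norm_mul, Complex.norm_real, Complex.norm_I, Real.norm_eq_abs,
        Complex.norm_ofNat, mul_one, abs_of_pos Real.pi_pos]
      nlinarith [Real.pi_gt_three]
    have h4 : 0 < |(m : ℝ)| ^ M := by positivity
    rw [inv_mul_eq_div, le_div_iff₀ h4, mul_comm]
    exact (mul_le_mul_of_nonneg_right h3 (norm_nonneg _)).trans h2
  have hsum : Summable fun m : ℤ => (|(m : ℝ)| ^ M)⁻¹ := by
    have := Real.summable_abs_int_rpow (b := M) (by exact_mod_cast hM)
    refine this.congr fun m => ?_
    rw [Real.rpow_neg (abs_nonneg _), Real.rpow_natCast]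
  have hpois := SchwartzMap.tsum_eq_tsum_fourier (hc.toSchwartzMap hg) 0
  simp only [zero_add, QuotientAddGroup.mk_zero, fourier_eval_zero, mul_one] at hpois
  have hcoe : ∀ m : ℤ, (𝓕 (hc.toSchwartzMap hg)) (m : ℝ) = 𝓕 g (m : ℝ) := fun m => by
    rw [SchwartzMap.fourier_coe]; rfl
  simp only [hcoe, HasCompactSupport.toSchwartzMap_toFun] at hpois
  have hz : 𝓕 g ((0 : ℤ) : ℝ) = ∫ x, g x := by
    rw [Real.fourier_real_eq]; simp
  have hsumF : Summable fun m : ℤ => if m = 0 then 0 else 𝓕 g (m : ℝ) := by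
    refine Summable.of_norm_bounded (hsum.mul_right I) fun m => ?_
    split_ifs with h
    · simp only [norm_zero]; positivity
    · exact hbound m h
  have hsF : Summable fun m : ℤ => 𝓕 g (m : ℝ) := by
    refine (hsumF.add (hasSum_ite_eq (0 : ℤ) (𝓕 g ((0 : ℤ) : ℝ))).summable).congr fun m => ?_
    split_ifs with h <;> simp [h]
  change ∑' n : ℤ, g n = _ at hpois
  rw [hpois, hsF.tsum_eq_add_tsum_ite 0, hz, add_sub_cancel_left, ← tsum_mul_right]
  refine tsum_of_norm_bounded (hsum.mul_right I).hasSum fun m => ?_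
  split_ifs with h
  · simp only [norm_zero]; positivity
  · exact hbound m h

/-- Rescaled form: the sample sum with step `y` of a smooth function supported in `[-1, 1]`. -/
theorem norm_tsum_scaled_sub_integral_le {M : ℕ} (hM : 2 ≤ M) {F : ℝ → ℂ}
    (hF : ContDiff ℝ (⊤ : ℕ∞) F) (hs : ∀ x, 1 < |x| → F x = 0) {B : ℝ}
    (hB : ∀ x, ‖iteratedDeriv M F x‖ ≤ B) {y : ℝ} (hy : 0 < y) :
    ‖∑' j : ℤ, F (y * j) - (1 / y : ℝ) * ∫ x, F x‖ ≤
      (∑' m : ℤ, (|(m : ℝ)| ^ M)⁻¹) * (2 * B * (y ^ M / y)) := by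
  have hcF : HasCompactSupport F := by
    refine HasCompactSupport.intro (isCompact_Icc (a := (-1 : ℝ)) (b := 1)) fun x hx => hs x ?_
    by_contra h
    exact hx (abs_le.mp (not_lt.mp h))
  have hg : ContDiff ℝ (⊤ : ℕ∞) fun x => F (y * x) := hF.comp (contDiff_const.mul contDiff_id)
  have hc : HasCompactSupport fun x => F (y * x) :=
    hcF.comp_homeomorph (Homeomorph.mulLeft₀ y hy.ne')
  have h := norm_tsum_int_sub_integral_le hM hg hc
  have h1 : ∫ x, F (y * x) = ((1 / y : ℝ) : ℂ) * ∫ x, F x := by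
    rw [Measure.integral_comp_mul_left F y, abs_of_pos (inv_pos.mpr hy), Complex.real_smul]
    simp
  rw [h1] at h
  refine h.trans (mul_le_mul_of_nonneg_left ?_ (tsum_nonneg fun _ => by positivity))
  rw [iteratedDeriv_comp_const_smul (hF.of_le (by exact_mod_cast le_top)) y]
  simp only [norm_smul, norm_pow, Real.norm_eq_abs, abs_of_pos hy]
  rw [integral_const_mul, Measure.integral_comp_mul_left (fun x => ‖iteratedDeriv M F x‖) y,
    abs_of_pos (inv_pos.mpr hy), smul_eq_mul]
  have hsd : ∀ x, 1 < |x| → iteratedDeriv M F x = 0 := by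
    intro x hx
    have : F =ᶠ[nhds x] fun _ => 0 := by
      filter_upwards [(isOpen_lt continuous_const continuous_abs).mem_nhds hx] with z hz
      exact hs z hz
    rw [this.iteratedDeriv_eq]
    cases M <;> simp
  have h2 : ∫ x, ‖iteratedDeriv M F x‖ ≤ 2 * B := by
    rw [← setIntegral_eq_integral_of_forall_compl_eq_zero (s := Set.Icc (-1 : ℝ) 1)]
    · refine (le_abs_self _).trans ?_
      rw [← Real.norm_eq_abs]
      refine (norm_setIntegral_le_of_norm_le_const (C := B) (by simp) (fun x _ => ?_)).trans ?_
      · simpa using hB x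
      · simp; norm_num; linarith
    · intro x hx
      rw [hsd x, norm_zero]
      by_contra h
      exact hx (abs_le.mp (not_lt.mp h))
  calc y ^ M * (y⁻¹ * ∫ x, ‖iteratedDeriv M F x‖) ≤ y ^ M * (y⁻¹ * (2 * B)) := by gcongr
    _ = _ := by field_simp

/-- A sum over `ℤ` of a finitely supported function, split by sign. -/
theorem tsum_int_eq_add_sum_range {G : ℤ → ℂ} {J : ℕ}
    (hG : ∀ n : ℕ, J ≤ n → G ((n : ℤ) + 1) = 0 ∧ G (-((n : ℤ) + 1)) = 0) :
    ∑' j : ℤ, G j = G 0 + ∑ j ∈ Finset.range J, (G ((j : ℤ) + 1) + G (-((j : ℤ) + 1))) := by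
  have h1 : HasSum (fun n : ℕ => G ((n : ℤ) + 1)) (∑ j ∈ Finset.range J, G ((j : ℤ) + 1)) :=
    hasSum_sum_of_ne_finset_zero fun n hn => (hG n (by simpa using hn)).1
  have h2 : HasSum (fun n : ℕ => G (-((n : ℤ) + 1)))
      (∑ j ∈ Finset.range J, G (-((j : ℤ) + 1))) :=
    hasSum_sum_of_ne_finset_zero fun n hn => (hG n (by simpa using hn)).2
  have h3 := HasSum.of_add_one_of_neg_add_one h1 h2
  rw [h3.tsum_eq, Finset.sum_add_distrib]
  ring

/-- For bounded second argument `hFun` is a finite sum. -/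
theorem hFun_eq_sum_range {ω : ℝ → ℝ} (hω_supp : Function.support ω ⊆ Set.Ioo (1/2 : ℝ) 1)
    {y : ℝ} (hy : 0 < y) {J : ℕ} (hJ : 1 ≤ y * J) {z : ℝ} (hz : |z| ≤ 1 / 2) :
    hFun ω y z = ∑ j ∈ Finset.range J, (1 / (y * ((j : ℝ) + 1))) *
      (ω (y * ((j : ℝ) + 1)) - ω (|z| / (y * ((j : ℝ) + 1)))) := by
  have hz0 : ∀ x, x ∉ Set.Ioo (1/2 : ℝ) 1 → ω x = 0 := fun x hx => by
    by_contra h; exact hx (hω_supp h)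
  unfold hFun
  rw [tsum_pnat_eq_tsum_succ (f := fun n : ℕ => (1 / (y * (n : ℝ))) *
      (ω (y * (n : ℝ)) - ω (|z| / (y * (n : ℝ)))))]
  push_cast
  refine tsum_eq_sum fun n hn => ?_
  have hn' : (J : ℝ) ≤ n := by simpa using hn
  have h1 : 1 ≤ y * ((n : ℝ) + 1) := by nlinarith
  rw [hz0 (y * ((n : ℝ) + 1)) (fun h => by linarith [h.2]),
    hz0 (|z| / (y * ((n : ℝ) + 1))) (fun h => ?_)]
  · simp
  · have := h.1
    rw [lt_div_iff₀ (by linarith)] at this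
    nlinarith

/-- Folding an integral against `ω(|z| / a)` onto the positive half line. -/
theorem integral_mul_comp_abs_div {ω : ℝ → ℝ} (hω : Continuous ω)
    (hω_supp : Function.support ω ⊆ Set.Ioo (1/2 : ℝ) 1)
    {F : ℝ → ℂ} (hF : Continuous F) {a : ℝ} (ha : 0 < a) :
    ∫ z, F z * ((1 / a * ω (|z| / a) : ℝ) : ℂ) = ∫ v, (ω v : ℂ) * (F (a * v) + F (-(a * v))) := by
  have hz0 : ∀ x, x ∉ Set.Ioo (1/2 : ℝ) 1 → ω x = 0 := fun x hx => by
    by_contra h; exact hx (hω_supp h)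
  have hcω : HasCompactSupport fun v => (ω v : ℂ) := by
    refine HasCompactSupport.intro (isCompact_Icc (a := (1/2 : ℝ)) (b := 1)) fun x hx => ?_
    rw [hz0 x fun h => hx ⟨h.1.le, h.2.le⟩, Complex.ofReal_zero]
  have hωc : Continuous fun v => (ω v : ℂ) := Complex.continuous_ofReal.comp hω
  have i1 : Integrable fun v => (ω v : ℂ) * F (a * v) :=
    (by fun_prop : Continuous fun v => (ω v : ℂ) * F (a * v)).integrable_of_hasCompactSupport
      hcω.mul_right
  have i2 : Integrable fun v => (ω v : ℂ) * F (-(a * v)) :=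
    (by fun_prop : Continuous fun v => (ω v : ℂ) * F (-(a * v))).integrable_of_hasCompactSupport
      hcω.mul_right
  have h1 : ∫ z, F z * ((1 / a * ω (|z| / a) : ℝ) : ℂ) = ∫ v, (ω |v| : ℂ) * F (a * v) := by
    have := Measure.integral_comp_mul_left (fun z => F z * ((1 / a * ω (|z| / a) : ℝ) : ℂ)) a
    rw [abs_of_pos (inv_pos.mpr ha), eq_inv_smul_iff₀ ha.ne'] at this
    rw [← this, ← integral_smul]
    congr 1
    ext v
    rw [abs_mul, abs_of_pos ha, mul_div_cancel_left₀ _ ha.ne', Complex.real_smul]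
    have : (a : ℂ) ≠ 0 := by exact_mod_cast ha.ne'
    push_cast
    field_simp
  have h2 : ∀ v, (ω |v| : ℂ) * F (a * v) = (ω v : ℂ) * F (a * v) + (ω (-v) : ℂ) * F (a * v) := by
    intro v
    rcases le_or_gt 0 v with h | h
    · rw [abs_of_nonneg h, hz0 (-v) (fun h' => by linarith [h'.1])]; simp
    · rw [abs_of_neg h, hz0 v (fun h' => by linarith [h'.1])]; simp
  have h3 : ∀ v, (ω (-v) : ℂ) * F (a * v) = (fun v => (ω v : ℂ) * F (-(a * v))) (-v) := by
    intro v; simp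
  rw [h1]
  simp only [h2, mul_add]
  rw [integral_add i1 (by simp only [h3]; exact i2.comp_neg), integral_add i1 i2]
  congr 1
  simp only [h3]
  exact integral_neg_eq_self (fun v => (ω v : ℂ) * F (-(a * v))) volume

/-- `h(y, ·)` acts on smooth functions as a delta mass at the origin, up to powers of `y`. -/
theorem exists_norm_integral_mul_hFun_sub_le {ω : ℝ → ℝ} (hω_smooth : ContDiff ℝ (⊤ : ℕ∞) ω)
    (hω_nonneg : ∀ x, 0 ≤ ω x) (hω_supp : Function.support ω ⊆ Set.Ioo (1/2 : ℝ) 1)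
    (hω_int : ∫ x : ℝ, ω x = 1) {M : ℕ} (hM : 2 ≤ M) :
    ∃ K : ℝ, 0 ≤ K ∧ ∀ F : ℝ → ℂ, ContDiff ℝ (⊤ : ℕ∞) F → (∀ x, 1 / 2 < |x| → F x = 0) →
      ∀ B₀ B : ℝ, (∀ x, ‖F x‖ ≤ B₀) → (∀ x, ‖iteratedDeriv M F x‖ ≤ B) →
      ∀ y : ℝ, 0 < y →
        ‖(∫ z, F z * (hFun ω y z : ℂ)) - F 0‖ ≤ K * (B₀ + B) * (y ^ M / y) := by
  have hz0 : ∀ x, x ∉ Set.Ioo (1/2 : ℝ) 1 → ω x = 0 := fun x hx => by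
    by_contra h; exact hx (hω_supp h)
  have hωc : Continuous fun v => (ω v : ℂ) := Complex.continuous_ofReal.comp hω_smooth.continuous
  have hcω : HasCompactSupport fun v => (ω v : ℂ) := by
    refine HasCompactSupport.intro (isCompact_Icc (a := (1/2 : ℝ)) (b := 1)) fun x hx => ?_
    rw [hz0 x fun h => hx ⟨h.1.le, h.2.le⟩, Complex.ofReal_zero]
  set g : ℝ → ℂ := fun x => ((1 / x * ω x : ℝ) : ℂ) with hg_def
  have hg : ContDiff ℝ (⊤ : ℕ∞) g := by
    refine Complex.ofRealCLM.contDiff.comp (contDiff_iff_contDiffAt.mpr fun x => ?_)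
    rcases eq_or_ne x 0 with rfl | hx
    · refine (contDiffAt_const (c := (0 : ℝ))).congr_of_eventuallyEq ?_
      filter_upwards [Iio_mem_nhds (show (0 : ℝ) < 1 / 2 by norm_num)] with x hx
      rw [hz0 x fun h => by linarith [h.1, Set.mem_Iio.mp hx]]
      exact mul_zero _
    · exact (contDiffAt_const.div contDiffAt_id hx).mul hω_smooth.contDiffAt
  have hg_supp : ∀ x, 1 < |x| → g x = 0 := fun x hx => by
    simp only [hg_def]
    rw [hz0 x fun h => by rw [abs_of_pos (by linarith [h.1])] at hx; linarith [h.2]]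
    simp
  have hgc : HasCompactSupport g := hcω.mono' fun x hx => by
    refine subset_closure fun h => hx ?_
    simp only [hg_def]
    push_cast
    have h' : (ω x : ℂ) = 0 := h
    rw [h', mul_zero]
  obtain ⟨B₁, hB₁⟩ : ∃ B₁, ∀ x, ‖iteratedDeriv M g x‖ ≤ B₁ := by
    have hcs : HasCompactSupport (iteratedDeriv M g) := by
      rw [iteratedDeriv_eq_equiv_comp]
      exact (hgc.iteratedFDeriv (𝕜 := ℝ) M).comp_left (by simp)
    exact hcs.exists_bound_of_continuous (hg.continuous_iteratedDeriv M (by exact_mod_cast le_top))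
  set P : ℝ := ∑' m : ℤ, (|(m : ℝ)| ^ M)⁻¹ with hP
  have hP0 : 0 ≤ P := tsum_nonneg fun _ => by positivity
  have hB₁0 : 0 ≤ B₁ := (norm_nonneg _).trans (hB₁ 0)
  refine ⟨P * (2 * B₁) + P * 2, by positivity, ?_⟩
  intro F hF hFs B₀ B hB₀ hB y hy
  have hB₀0 : 0 ≤ B₀ := (norm_nonneg _).trans (hB₀ 0)
  have hB0 : 0 ≤ B := (norm_nonneg _).trans (hB 0)
  have hcF : HasCompactSupport F := by
    refine HasCompactSupport.intro (isCompact_Icc (a := (-(1/2) : ℝ)) (b := 1/2)) fun x hx => hFs x ?_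
    by_contra h
    exact hx (abs_le.mp (not_lt.mp h))
  obtain ⟨J, hJ'⟩ := exists_nat_ge (1 / y)
  have hJ : 1 ≤ y * J := by rwa [div_le_iff₀' hy] at hJ'
  set IF : ℂ := ∫ z, F z with hIF
  have hIFb : ‖IF‖ ≤ B₀ := by
    rw [hIF, ← setIntegral_eq_integral_of_forall_compl_eq_zero (s := Set.Icc (-(1/2) : ℝ) (1/2))]
    · refine (norm_setIntegral_le_of_norm_le_const (C := B₀) (by simp) (fun x _ => hB₀ x)).trans ?_
      simp; norm_num
    · intro x hx
      refine hFs x ?_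
      by_contra h
      exact hx (abs_le.mp (not_lt.mp h))
  set Ig : ℂ := ∫ z, g z with hIg
  set S : ℂ := ∑ j ∈ Finset.range J, g (y * ((j : ℝ) + 1)) with hS
  -- the diagonal part
  have hSE : ‖S - (1 / y : ℝ) * Ig‖ ≤ P * (2 * B₁ * (y ^ M / y)) := by
    have h := norm_tsum_scaled_sub_integral_le hM hg hg_supp hB₁ hy
    rw [tsum_int_eq_add_sum_range (J := J)] at h
    · convert h using 3
      rw [hS]
      simp only [Int.cast_zero, mul_zero]
      have : g 0 = 0 := by simp [hg_def]
      rw [this, zero_add]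
      refine Finset.sum_congr rfl fun j _ => ?_
      have h2 : g (y * ((-((j : ℤ) + 1) : ℤ) : ℝ)) = 0 := by
        simp only [hg_def]
        rw [hz0 _ fun h => ?_]
        · simp
        · have h3 := h.1
          push_cast at h3
          have : (0 : ℝ) ≤ j := Nat.cast_nonneg j
          nlinarith
      rw [h2, add_zero]
      push_cast
      rfl
    · intro n hn
      have hn' : (J : ℝ) ≤ n := by exact_mod_cast hn
      have h3 : 1 < y * ((n : ℝ) + 1) := by nlinarith
      constructor <;> apply hg_supp
      · push_cast; rwa [abs_of_pos (by linarith)]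
      · push_cast; rwa [mul_neg, abs_neg, abs_of_pos (by linarith)]
  -- the integrals against `ω(|z| / (y j))`
  set A : ℝ → ℂ := fun v => (ω v : ℂ) * ∑ j ∈ Finset.range J,
    (F (y * ((j : ℝ) + 1) * v) + F (-(y * ((j : ℝ) + 1) * v))) with hA
  have hFc := hF.continuous
  have hωc' := hω_smooth.continuous
  have hsplit : ∫ z, F z * (hFun ω y z : ℂ) = S * IF - ∫ v, A v := by
    have e1 : ∀ z, F z * (hFun ω y z : ℂ) = S * F z - ∑ j ∈ Finset.range J,
        F z * ((1 / (y * ((j : ℝ) + 1)) * ω (|z| / (y * ((j : ℝ) + 1))) : ℝ) : ℂ) := by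
      intro z
      by_cases hz : 1 / 2 < |z|
      · simp [hFs z hz]
      · rw [hFun_eq_sum_range hω_supp hy hJ (not_lt.mp hz), hS]
        simp only [hg_def]
        push_cast
        rw [← Finset.mul_sum, mul_comm _ (F z), ← mul_sub, ← Finset.sum_sub_distrib]
        congr 1
        exact Finset.sum_congr rfl fun j _ => by ring
    have i1 : ∀ j : ℕ, Integrable fun z =>
        F z * ((1 / (y * ((j : ℝ) + 1)) * ω (|z| / (y * ((j : ℝ) + 1))) : ℝ) : ℂ) := fun j =>
      (by fun_prop : Continuous fun z => F z * ((1 / (y * ((j : ℝ) + 1)) *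
        ω (|z| / (y * ((j : ℝ) + 1))) : ℝ) : ℂ)).integrable_of_hasCompactSupport hcF.mul_right
    simp only [e1]
    rw [integral_sub ((hFc.integrable_of_hasCompactSupport hcF).const_mul S)
      (integrable_finsetSum _ fun j _ => i1 j), integral_const_mul,
      integral_finsetSum _ fun j _ => i1 j]
    congr 1
    have i2 : ∀ j : ℕ, Integrable fun v => (ω v : ℂ) * (F (y * ((j : ℝ) + 1) * v) +
        F (-(y * ((j : ℝ) + 1) * v))) := fun j =>
      (by fun_prop : Continuous fun v => (ω v : ℂ) * (F (y * ((j : ℝ) + 1) * v) +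
        F (-(y * ((j : ℝ) + 1) * v)))).integrable_of_hasCompactSupport hcω.mul_right
    simp only [hA, Finset.mul_sum]
    rw [integral_finsetSum _ fun j _ => i2 j]
    exact Finset.sum_congr rfl fun j _ =>
      integral_mul_comp_abs_div hωc' hω_supp hFc (by positivity)
  have iA : Integrable A := (by fun_prop : Continuous A).integrable_of_hasCompactSupport
    hcω.mul_right
  set D : ℝ → ℂ := fun v => g v * ((1 / y : ℝ) * IF) - (ω v : ℂ) * F 0 with hD
  have ig : Integrable g := hg.continuous.integrable_of_hasCompactSupport hgc
  have iω : Integrable fun v => (ω v : ℂ) := hωc.integrable_of_hasCompactSupport hcω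
  have iD : Integrable D := (ig.mul_const _).sub (iω.mul_const _)
  have hDint : ∫ v, D v = Ig * ((1 / y : ℝ) * IF) - F 0 := by
    simp only [hD]
    rw [integral_sub (ig.mul_const _) (iω.mul_const _), integral_mul_const, integral_mul_const,
      integral_complex_ofReal (f := ω), hω_int, Complex.ofReal_one, one_mul]
  have hAD : ‖(∫ v, A v) - ∫ v, D v‖ ≤ P * (2 * B * (y ^ M / y)) := by
    rw [← integral_sub iA iD]
    have iω' : Integrable fun v => ω v * (P * (2 * B * (y ^ M / y))) := by
      refine Integrable.mul_const ?_ _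
      exact Integrable.of_integral_ne_zero (by rw [hω_int]; exact one_ne_zero)
    refine (norm_integral_le_of_norm_le iω' (Filter.Eventually.of_forall fun v => ?_)).trans ?_
    · by_cases hv : v ∈ Set.Ioo (1/2 : ℝ) 1
      · have hv0 : 0 < v := by linarith [hv.1]
        have h := norm_tsum_scaled_sub_integral_le hM hF (fun x hx => hFs x (by linarith)) hB
          (mul_pos hy hv0)
        rw [tsum_int_eq_add_sum_range (J := J)] at h
        · have e : A v - D v = (ω v : ℂ) * (F (y * v * ((0 : ℤ) : ℝ)) +
              ∑ j ∈ Finset.range J, (F (y * v * (((j : ℤ) + 1 : ℤ) : ℝ)) +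
                F (y * v * ((-((j : ℤ) + 1) : ℤ) : ℝ))) - ((1 / (y * v) : ℝ) : ℂ) * IF) := by
            have e2 : ∑ j ∈ Finset.range J, (F (y * v * (((j : ℤ) + 1 : ℤ) : ℝ)) +
                F (y * v * ((-((j : ℤ) + 1) : ℤ) : ℝ))) = ∑ j ∈ Finset.range J,
                (F (y * ((j : ℝ) + 1) * v) + F (-(y * ((j : ℝ) + 1) * v))) := by
              refine Finset.sum_congr rfl fun j _ => ?_
              push_cast
              congr 2 <;> ring
            rw [e2]
            simp only [hA, hD, hg_def, Int.cast_zero, mul_zero]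
            generalize ∑ j ∈ Finset.range J,
              (F (y * ((j : ℝ) + 1) * v) + F (-(y * ((j : ℝ) + 1) * v))) = T
            push_cast
            have : (v : ℂ) ≠ 0 := by exact_mod_cast hv0.ne'
            have : (y : ℂ) ≠ 0 := by exact_mod_cast hy.ne'
            field_simp
            ring
          rw [e, norm_mul, Complex.norm_real, Real.norm_eq_abs, abs_of_nonneg (hω_nonneg v)]
          refine mul_le_mul_of_nonneg_left (h.trans ?_) (hω_nonneg v)
          refine mul_le_mul_of_nonneg_left (mul_le_mul_of_nonneg_left ?_ (by positivity)) hP0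
          rw [mul_pow, mul_div_mul_comm]
          refine mul_le_of_le_one_right (by positivity) ?_
          rw [div_le_one hv0]
          exact pow_le_of_le_one hv0.le hv.2.le (by omega)
        · intro n hn
          have hn' : (J : ℝ) ≤ n := by exact_mod_cast hn
          have h3 : 1 / 2 < y * v * ((n : ℝ) + 1) := by
            have : 1 < y * ((n : ℝ) + 1) := by nlinarith
            nlinarith [hv.1]
          constructor <;> apply hFs
          · push_cast; rwa [abs_of_pos (by linarith)]
          · push_cast; rwa [mul_neg, abs_neg, abs_of_pos (by linarith)]
      · simp [hA, hD, hg_def, hz0 v hv]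
    · rw [integral_mul_const, hω_int, one_mul]
  have key : (∫ z, F z * (hFun ω y z : ℂ)) - F 0 =
      (S - (1 / y : ℝ) * Ig) * IF - ((∫ v, A v) - ∫ v, D v) := by
    rw [hsplit, hDint]; ring
  rw [key]
  have hY : 0 ≤ y ^ M / y := by positivity
  calc _ ≤ ‖S - (1 / y : ℝ) * Ig‖ * ‖IF‖ + ‖(∫ v, A v) - ∫ v, D v‖ :=
        (norm_sub_le _ _).trans (by rw [norm_mul])
    _ ≤ P * (2 * B₁ * (y ^ M / y)) * B₀ + P * (2 * B * (y ^ M / y)) := by gcongr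
    _ ≤ _ := by
        have : 0 ≤ P * (2 * B₁) * B * (y ^ M / y) + P * 2 * B₀ * (y ^ M / y) := by positivity
        linarith

/-- Smoothness of weighted averages of `f` over the segment from the origin. -/
theorem contDiff_integral_pow_mul_comp_mul (n : ℕ) :
    ∀ {f : ℝ → ℝ}, ContDiff ℝ (⊤ : ℕ∞) f → ∀ k : ℕ,
      ContDiff ℝ n fun x => ∫ u in (0 : ℝ)..1, u ^ k * f (x * u) := by
  induction n with
  | zero =>
    intro f hf k
    have := hf.continuous
    rw [Nat.cast_zero, contDiff_zero]
    exact intervalIntegral.continuous_parametric_intervalIntegral_of_continuous'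
      (f := fun x u => u ^ k * f (x * u)) (by fun_prop) 0 1
  | succ n ih =>
    intro f hf k
    have hfc := hf.continuous
    have hf' : ContDiff ℝ (⊤ : ℕ∞) (deriv f) := (contDiff_infty_iff_deriv.mp hf).2
    have hfc' := hf'.continuous
    have hd : ∀ x, HasDerivAt (fun x => ∫ u in (0 : ℝ)..1, u ^ k * f (x * u))
        (∫ u in (0 : ℝ)..1, u ^ (k + 1) * deriv f (x * u)) x := by
      intro x
      obtain ⟨C, hC⟩ := (isCompact_Icc (a := -(|x| + 1)) (b := |x| + 1)).exists_bound_of_continuousOn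
        hfc'.continuousOn
      refine (intervalIntegral.hasDerivAt_integral_of_dominated_loc_of_deriv_le
        (F := fun x u => u ^ k * f (x * u)) (F' := fun x u => u ^ (k + 1) * deriv f (x * u))
        (bound := fun _ => C) (s := Metric.ball x 1) (Metric.ball_mem_nhds x one_pos)
        (Filter.Eventually.of_forall fun z => ?_) ?_ ?_
        (Filter.Eventually.of_forall fun u hu z hz => ?_) ?_
        (Filter.Eventually.of_forall fun u hu z hz => ?_)).2
      · exact (by fun_prop : Continuous fun u => u ^ k * f (z * u)).aestronglyMeasurable
      · exact (by fun_prop : Continuous fun u => u ^ k * f (x * u)).intervalIntegrable _ _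
      · exact (by fun_prop : Continuous fun u => u ^ (k + 1) * deriv f (x * u)).aestronglyMeasurable
      · rw [Set.uIoc_of_le zero_le_one] at hu
        have hz' : |z| ≤ |x| + 1 := by
          rw [Metric.mem_ball, Real.dist_eq] at hz
          linarith [abs_sub_abs_le_abs_sub z x]
        have h1 : |z * u| ≤ |x| + 1 := by
          rw [abs_mul, abs_of_pos hu.1]
          exact (mul_le_of_le_one_right (abs_nonneg _) hu.2).trans hz'
        rw [norm_mul, norm_pow, Real.norm_eq_abs u, abs_of_pos hu.1]
        exact (mul_le_of_le_one_left (norm_nonneg _) (pow_le_one₀ hu.1.le hu.2)).trans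
          (hC _ (abs_le.mp h1))
      · exact intervalIntegrable_const
      · have h1 : HasDerivAt f (deriv f (z * u)) (z * u) :=
          (hf.differentiable (by simp)).differentiableAt.hasDerivAt
        have h2 := (h1.comp z ((hasDerivAt_id z).mul_const u)).const_mul (u ^ k)
        exact h2.congr_deriv (by ring)
    push_cast
    rw [contDiff_succ_iff_deriv]
    refine ⟨fun x => (hd x).differentiableAt, by simp, ?_⟩
    rw [funext fun x => (hd x).deriv]
    exact ih hf' (k + 1)

/-- The derivative of a smooth even function is `x` times a smooth even function. -/
theorem exists_deriv_eq_mul_of_even {f : ℝ → ℝ} (hf : ContDiff ℝ (⊤ : ℕ∞) f)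
    (he : ∀ x, f (-x) = f x) :
    ∃ g : ℝ → ℝ, ContDiff ℝ (⊤ : ℕ∞) g ∧ (∀ x, g (-x) = g x) ∧ ∀ x, deriv f x = x * g x := by
  have hf1 : ContDiff ℝ (⊤ : ℕ∞) (deriv f) := (contDiff_infty_iff_deriv.mp hf).2
  have hf2 : ContDiff ℝ (⊤ : ℕ∞) (deriv (deriv f)) := (contDiff_infty_iff_deriv.mp hf1).2
  have ho : ∀ x, deriv f (-x) = -deriv f x := fun x => by
    have h := deriv_comp_neg f x
    simp only [he] at h
    change deriv f x = _ at h
    rw [h, neg_neg]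
  have he2 : ∀ x, deriv (deriv f) (-x) = deriv (deriv f) x := fun x => by
    have h := deriv_comp_neg (deriv f) x
    simp only [ho] at h
    rw [show (fun x => -deriv f x) = -deriv f from rfl, deriv.neg] at h
    linarith
  refine ⟨fun x => ∫ u in (0 : ℝ)..1, deriv (deriv f) (x * u), ?_, fun x => ?_, fun x => ?_⟩
  · refine contDiff_infty.mpr fun n => ?_
    simpa using contDiff_integral_pow_mul_comp_mul n hf2 0
  · simp only [neg_mul, he2]
  · have h0 : deriv f 0 = 0 := by have := ho 0; rw [neg_zero] at this; linarith
    have hc := hf2.continuous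
    have := intervalIntegral.integral_eq_sub_of_hasDerivAt (a := 0) (b := 1)
      (f := fun u => deriv f (x * u)) (f' := fun u => x * deriv (deriv f) (x * u))
      (fun u _ => by
        have h1 : HasDerivAt (deriv f) (deriv (deriv f) (x * u)) (x * u) :=
          (hf1.differentiable (by simp)).differentiableAt.hasDerivAt
        exact (h1.comp u ((hasDerivAt_id u).const_mul x)).congr_deriv (by ring))
      ((by fun_prop : Continuous fun u => x * deriv (deriv f) (x * u)).intervalIntegrable _ _)
    rw [intervalIntegral.integral_const_mul] at this
    simp only [mul_one, mul_zero, h0, sub_zero] at this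
    exact this.symm

/-- A slice of a radial function along a line at distance `|t|` from the origin, with a
polynomial weight and an oscillating factor of frequency `u`. -/
noncomputable def radialWave (p : Polynomial ℝ) (f : ℝ → ℝ) (l t u z : ℝ) : ℂ :=
  ((p.eval z * f (√((l * z) ^ 2 + t ^ 2)) : ℝ) : ℂ) * e2pi (-(u * z))

theorem norm_e2pi (x : ℝ) : ‖e2pi x‖ = 1 := by
  rw [e2pi, show (2 * Real.pi * Complex.I * x : ℂ) = ((2 * Real.pi * x : ℝ) : ℂ) * Complex.I by
    push_cast; ring]
  exact Complex.norm_exp_ofReal_mul_I _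

theorem e2pi_add (x y : ℝ) : e2pi (x + y) = e2pi x * e2pi y := by
  simp only [e2pi, ← Complex.exp_add]
  push_cast
  ring_nf

theorem contDiff_e2pi {n : WithTop ℕ∞} : ContDiff ℝ n e2pi :=
  (contDiff_const.mul Complex.ofRealCLM.contDiff).cexp

theorem hasDerivAt_e2pi (x : ℝ) : HasDerivAt e2pi (2 * Real.pi * Complex.I * e2pi x) x := by
  have := ((Complex.ofRealCLM.hasDerivAt (x := x)).const_mul (2 * Real.pi * Complex.I : ℂ)).cexp
  refine HasDerivAt.congr_deriv (f := e2pi) this ?_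
  simp only [e2pi, Complex.ofRealCLM_apply, Complex.ofReal_one]
  ring

theorem contDiff_radialWave (p : Polynomial ℝ) {f : ℝ → ℝ} (hf : ContDiff ℝ (⊤ : ℕ∞) f)
    (l u : ℝ) {t : ℝ} (ht : t ≠ 0) : ContDiff ℝ (⊤ : ℕ∞) (radialWave p f l t u) := by
  have h1 : ContDiff ℝ (⊤ : ℕ∞) fun z : ℝ => √((l * z) ^ 2 + t ^ 2) :=
    ContDiff.sqrt (by fun_prop) fun z => by positivity
  have h2 : ContDiff ℝ (⊤ : ℕ∞) fun z : ℝ => p.eval z := by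
    simpa using p.contDiff_aeval (𝕜 := ℝ) (n := (⊤ : ℕ∞))
  exact (Complex.ofRealCLM.contDiff.comp (h2.mul (hf.comp h1))).mul
    (contDiff_e2pi.comp (by fun_prop))

theorem deriv_radialWave (p : Polynomial ℝ) {f g : ℝ → ℝ} (hf : ContDiff ℝ (⊤ : ℕ∞) f)
    (hg : ∀ x, deriv f x = x * g x) (l u : ℝ) {t : ℝ} (ht : t ≠ 0) :
    deriv (radialWave p f l t u) = fun z => radialWave p.derivative f l t u z +
      ((l ^ 2 : ℝ) : ℂ) * radialWave (p * Polynomial.X) g l t u z +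
      (-(2 * Real.pi * Complex.I * u)) * radialWave p f l t u z := by
  funext z
  have hpos : 0 < (l * z) ^ 2 + t ^ 2 := by positivity
  have h1 : HasDerivAt (fun z : ℝ => (l * z) ^ 2 + t ^ 2) (2 * (l * z) * l) z := by
    have := ((((hasDerivAt_id z).const_mul l).pow 2).add_const (t ^ 2))
    exact this.congr_deriv (by simp)
  have h2 := h1.sqrt hpos.ne'
  have h3 : HasDerivAt f (deriv f (√((l * z) ^ 2 + t ^ 2))) (√((l * z) ^ 2 + t ^ 2)) :=
    (hf.differentiable (by simp)).differentiableAt.hasDerivAt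
  have h4 := ((p.hasDerivAt z).mul (h3.comp z h2)).ofReal_comp
  have h5 := (hasDerivAt_e2pi (-(u * z))).scomp z ((hasDerivAt_id z).const_mul u).neg
  have h6 := h4.mul h5
  refine HasDerivAt.deriv (f := radialWave p f l t u) (HasDerivAt.congr_deriv h6 ?_)
  rw [hg]
  have hs : √((l * z) ^ 2 + t ^ 2) ≠ 0 := (Real.sqrt_pos.mpr hpos).ne'
  have hs' : (√((l * z) ^ 2 + t ^ 2) : ℂ) ≠ 0 := by exact_mod_cast hs
  simp only [radialWave, Polynomial.eval_mul, Polynomial.eval_X, Function.comp_apply, id_eq,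
    Complex.real_smul, Pi.neg_apply, Pi.mul_apply]
  generalize √((l * z) ^ 2 + t ^ 2) = s at hs' ⊢
  push_cast
  field_simp

/-- Uniform bounds for the derivatives of `radialWave`. -/
theorem exists_norm_iteratedDeriv_radialWave_le (n : ℕ) :
    ∀ {f : ℝ → ℝ}, ContDiff ℝ (⊤ : ℕ∞) f → (∀ x, f (-x) = f x) → (∀ x, 1 / 2 < |x| → f x = 0) →
      ∀ p : Polynomial ℝ, ∃ C : ℝ, ∀ l t u z : ℝ, 1 ≤ l → l ≤ 2 → t ≠ 0 →
        ‖iteratedDeriv n (radialWave p f l t u) z‖ ≤ C * (1 + |u|) ^ n := by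
  induction n with
  | zero =>
    intro f hf _ hs p
    obtain ⟨C₁, hC₁⟩ := (isCompact_Icc (a := -(1 / 2 : ℝ)) (b := 1 / 2)).exists_bound_of_continuousOn
      hf.continuous.continuousOn
    obtain ⟨C₂, hC₂⟩ := (isCompact_Icc (a := -(1 / 2 : ℝ)) (b := 1 / 2)).exists_bound_of_continuousOn
      p.continuous.continuousOn
    have hC₁0 : 0 ≤ C₁ := (norm_nonneg _).trans (hC₁ 0 (by norm_num))
    have hC₂0 : 0 ≤ C₂ := (norm_nonneg _).trans (hC₂ 0 (by norm_num))
    refine ⟨C₂ * C₁, fun l t u z hl _ _ => ?_⟩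
    rw [iteratedDeriv_zero, radialWave, norm_mul, norm_e2pi, mul_one, Complex.norm_real, norm_mul,
      pow_zero, mul_one]
    set s := √((l * z) ^ 2 + t ^ 2) with hsdef
    by_cases h : 1 / 2 < |s|
    · rw [hs s h, norm_zero, mul_zero]
      positivity
    · push Not at h
      have hz : |z| ≤ 1 / 2 := by
        refine le_trans ?_ h
        rw [abs_of_nonneg (Real.sqrt_nonneg _)]
        refine Real.le_sqrt_of_sq_le ?_
        rw [sq_abs]
        have : 1 ≤ l ^ 2 := by nlinarith
        nlinarith [sq_nonneg z, sq_nonneg t]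
      exact mul_le_mul (hC₂ z (abs_le.mp hz)) (hC₁ s (abs_le.mp h)) (norm_nonneg _) hC₂0
  | succ n ih =>
    intro f hf he hs p
    obtain ⟨g, hg, hge, hfg⟩ := exists_deriv_eq_mul_of_even hf he
    have hgs : ∀ x, 1 / 2 < |x| → g x = 0 := by
      intro x hx
      have h1 : f =ᶠ[nhds x] fun _ => 0 := by
        filter_upwards [(isOpen_lt continuous_const continuous_abs).mem_nhds hx] with z hz
        exact hs z hz
      have h2 := h1.deriv_eq
      rw [deriv_const, hfg] at h2
      rcases mul_eq_zero.mp h2 with h | h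
      · rw [h, abs_zero] at hx; norm_num at hx
      · exact h
    obtain ⟨C₁, hC₁⟩ := ih hf he hs p.derivative
    obtain ⟨C₂, hC₂⟩ := ih hg hge hgs (p * Polynomial.X)
    obtain ⟨C₃, hC₃⟩ := ih hf he hs p
    refine ⟨C₁ + 4 * C₂ + 2 * Real.pi * C₃, fun l t u z hl hl2 ht => ?_⟩
    have hcd : ∀ (p : Polynomial ℝ) {f : ℝ → ℝ}, ContDiff ℝ (⊤ : ℕ∞) f →
        ContDiff ℝ n (radialWave p f l t u) := fun p f hf =>
      (contDiff_radialWave p hf l u ht).of_le (by exact_mod_cast le_top)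
    have h1 := hC₁ l t u z hl hl2 ht
    have h2 := hC₂ l t u z hl hl2 ht
    have h3 := hC₃ l t u z hl hl2 ht
    have e1 : iteratedDeriv (n + 1) (radialWave p f l t u) z =
        iteratedDeriv n (radialWave p.derivative f l t u) z +
        ((l ^ 2 : ℝ) : ℂ) * iteratedDeriv n (radialWave (p * Polynomial.X) g l t u) z +
        (-(2 * Real.pi * Complex.I * u)) * iteratedDeriv n (radialWave p f l t u) z := by
      rw [iteratedDeriv_succ', deriv_radialWave p hf hfg l u ht]
      have a1 := (hcd p.derivative hf).contDiffAt (x := z)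
      have a2 := (contDiff_const (c := ((l ^ 2 : ℝ) : ℂ)).mul
        (hcd (p * Polynomial.X) hg)).contDiffAt (x := z)
      have a3 := (contDiff_const (c := (-(2 * Real.pi * Complex.I * u) : ℂ)).mul
        (hcd p hf)).contDiffAt (x := z)
      have b1 := iteratedDeriv_add (a1.add a2) a3
      have b2 := iteratedDeriv_add a1 a2
      rw [iteratedDeriv_const_mul _ ((hcd p hf).contDiffAt)] at b1
      rw [iteratedDeriv_const_mul _ ((hcd (p * Polynomial.X) hg).contDiffAt)] at b2
      rw [← b2]
      exact b1
    rw [e1]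
    have hU : 0 < (1 + |u|) ^ n := by positivity
    have hC₁0 : 0 ≤ C₁ * (1 + |u|) ^ n := (norm_nonneg _).trans h1
    have hC₂0 : 0 ≤ C₂ * (1 + |u|) ^ n := (norm_nonneg _).trans h2
    have hC₃0 : 0 ≤ C₃ * (1 + |u|) ^ n := (norm_nonneg _).trans h3
    have hl' : ‖((l ^ 2 : ℝ) : ℂ)‖ ≤ 4 := by
      rw [Complex.norm_real, Real.norm_eq_abs, abs_of_nonneg (sq_nonneg l)]
      nlinarith
    have hu' : ‖(-(2 * Real.pi * Complex.I * u) : ℂ)‖ = 2 * Real.pi * |u| := by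
      simp [abs_of_pos Real.pi_pos]
    refine (norm_add₃_le).trans ?_
    rw [norm_mul, norm_mul, hu']
    have hua := abs_nonneg u
    calc _ ≤ C₁ * (1 + |u|) ^ n + 4 * (C₂ * (1 + |u|) ^ n) +
          2 * Real.pi * |u| * (C₃ * (1 + |u|) ^ n) := by gcongr
      _ ≤ _ := by
        rw [pow_succ]
        have q1 := mul_nonneg hC₁0 hua
        have q2 := mul_nonneg hC₂0 hua
        have q3 := mul_nonneg Real.pi_pos.le hC₃0
        linarith

/-- Change of variables for an invertible linear substitution in the plane. -/
theorem integral_comp_linear_prod (f : ℝ × ℝ → ℂ) {a b c d : ℝ} (hD : a * d - b * c ≠ 0) :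
    ∫ p : ℝ × ℝ, f (a * p.1 + b * p.2, c * p.1 + d * p.2) =
      ((|a * d - b * c|⁻¹ : ℝ) : ℂ) * ∫ p : ℝ × ℝ, f p := by
  set L : ℝ × ℝ →ₗ[ℝ] ℝ × ℝ :=
    Matrix.toLin (.finTwoProd ℝ) (.finTwoProd ℝ) !![a, b; c, d] with hL
  have hdet : LinearMap.det L = a * d - b * c := by
    rw [hL, LinearMap.det_toLin, Matrix.det_fin_two_of]
  have hdet0 : LinearMap.det L ≠ 0 := by rwa [hdet]
  have hLa : ∀ p : ℝ × ℝ, L p = (a * p.1 + b * p.2, c * p.1 + d * p.2) := fun p =>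
    Matrix.toLin_finTwoProd_apply _ _ _ _ _
  have hemb : MeasurableEmbedding (L : ℝ × ℝ → ℝ × ℝ) :=
    (LinearMap.equivOfDetNeZero L hdet0).toContinuousLinearEquiv.toHomeomorph.measurableEmbedding
  have h := hemb.integral_map (μ := volume) f
  rw [Measure.map_linearMap_addHaar_eq_smul_addHaar volume hdet0, integral_smul_measure,
    ENNReal.toReal_ofReal (abs_nonneg _), hdet, abs_inv, Complex.real_smul] at h
  simp only [hLa] at h
  exact h.symm

/-- Integrating a radial bump with a plane wave against `h(y, ·)` in the first variable yields
the one-dimensional Fourier transform in the second variable. -/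
theorem exists_norm_integral_radial_mul_hFun_sub_le {ω : ℝ → ℝ}
    (hω_smooth : ContDiff ℝ (⊤ : ℕ∞) ω)
    (hω_nonneg : ∀ x, 0 ≤ ω x) (hω_supp : Function.support ω ⊆ Set.Ioo (1/2 : ℝ) 1)
    (hω_int : ∫ x : ℝ, ω x = 1) {ω₀ : ℝ → ℝ} (hω₀_smooth : ContDiff ℝ (⊤ : ℕ∞) ω₀)
    (hω₀_even : ∀ x, ω₀ (-x) = ω₀ x) (hω₀_supp : ∀ x, 1 / 2 < |x| → ω₀ x = 0)
    {M : ℕ} (hM : 2 ≤ M) :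
    ∃ K : ℝ, 0 ≤ K ∧ ∀ l u T y : ℝ, 1 ≤ l → l ≤ 2 → 0 < y →
      ‖(∫ p : ℝ × ℝ, ((ω₀ (√((l * p.1) ^ 2 + p.2 ^ 2)) * hFun ω y p.1 : ℝ) : ℂ) *
        (e2pi (-(u * p.1)) * e2pi (-(p.2 * T)))) - fourierW0 ω₀ T‖ ≤
        K * (1 + |u|) ^ M * (y ^ M / y) := by
  obtain ⟨K, hK0, hK⟩ :=
    exists_norm_integral_mul_hFun_sub_le hω_smooth hω_nonneg hω_supp hω_int hM
  obtain ⟨C₀, hC₀⟩ := exists_norm_iteratedDeriv_radialWave_le 0 hω₀_smooth hω₀_even hω₀_supp 1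
  obtain ⟨C₁, hC₁⟩ := exists_norm_iteratedDeriv_radialWave_le M hω₀_smooth hω₀_even hω₀_supp 1
  have hC₀0 : 0 ≤ C₀ := by
    simpa using (norm_nonneg _).trans (hC₀ 1 1 0 0 le_rfl one_le_two one_ne_zero)
  have hC₁0 : 0 ≤ C₁ := by
    simpa using (norm_nonneg _).trans (hC₁ 1 1 0 0 le_rfl one_le_two one_ne_zero)
  refine ⟨K * (C₀ + C₁), by positivity, fun l u T y hl hl2 hy => ?_⟩
  set ε := K * (C₀ + C₁) * (1 + |u|) ^ M * (y ^ M / y) with hε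
  have hU : 1 ≤ (1 + |u|) ^ M := one_le_pow₀ (by linarith [abs_nonneg u])
  have hε0 : 0 ≤ ε := by positivity
  have hω₀c := hω₀_smooth.continuous
  have hωc := hω_smooth.continuous
  have hec : Continuous e2pi := contDiff_e2pi (n := 0).continuous
  have hzero : ∀ z t, 1 / 2 < |z| ∨ 1 / 2 < |t| → ω₀ (√((l * z) ^ 2 + t ^ 2)) = 0 := by
    intro z t h
    refine hω₀_supp _ ?_
    rw [abs_of_nonneg (Real.sqrt_nonneg _)]
    refine Real.lt_sqrt_of_sq_lt ?_
    have h1 : 1 ≤ l ^ 2 := by nlinarith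
    have h2 : z ^ 2 ≤ (l * z) ^ 2 := by nlinarith [sq_nonneg z]
    rcases h with h | h
    · have : (1 / 2 : ℝ) ^ 2 < |z| ^ 2 := pow_lt_pow_left₀ h (by norm_num) two_ne_zero
      rw [sq_abs] at this
      nlinarith [sq_nonneg t]
    · have : (1 / 2 : ℝ) ^ 2 < |t| ^ 2 := pow_lt_pow_left₀ h (by norm_num) two_ne_zero
      rw [sq_abs] at this
      nlinarith [sq_nonneg z]
  set G : ℝ × ℝ → ℂ := fun p => ((ω₀ (√((l * p.1) ^ 2 + p.2 ^ 2)) * hFun ω y p.1 : ℝ) : ℂ) *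
        (e2pi (-(u * p.1)) * e2pi (-(p.2 * T))) with hG
  have hGs : ∀ p : ℝ × ℝ, 1 / 2 < |p.1| ∨ 1 / 2 < |p.2| → G p = 0 := fun p hp => by
    simp only [hG]
    rw [hzero _ _ hp]
    simp
  have hGint : Integrable G := by
    obtain ⟨J, hJ'⟩ := exists_nat_ge (1 / y)
    have hJ : 1 ≤ y * J := by rwa [div_le_iff₀' hy] at hJ'
    have e : G = fun p => ((ω₀ (√((l * p.1) ^ 2 + p.2 ^ 2)) *
        (∑ j ∈ Finset.range J, (1 / (y * ((j : ℝ) + 1))) *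
          (ω (y * ((j : ℝ) + 1)) - ω (|p.1| / (y * ((j : ℝ) + 1))))) : ℝ) : ℂ) *
        (e2pi (-(u * p.1)) * e2pi (-(p.2 * T))) := by
      funext p
      by_cases hp : 1 / 2 < |p.1|
      · rw [hGs p (Or.inl hp), hzero _ _ (Or.inl hp)]
        simp
      · simp only [hG]
        rw [hFun_eq_sum_range hω_supp hy hJ (not_lt.mp hp)]
    have hcs : HasCompactSupport G := by
      refine HasCompactSupport.intro ((isCompact_Icc (a := -(1/2 : ℝ)) (b := 1/2)).prod
        (isCompact_Icc (a := -(1/2 : ℝ)) (b := 1/2))) fun p hp => hGs p ?_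
      by_contra! h
      exact hp ⟨abs_le.mp h.1, abs_le.mp h.2⟩
    refine Continuous.integrable_of_hasCompactSupport ?_ hcs
    rw [e]
    fun_prop
  have hprod : ∫ p, G p = ∫ t, ∫ z, G (z, t) := by
    rw [Measure.volume_eq_prod] at hGint ⊢
    exact integral_prod_symm G hGint
  have hinner_int : Integrable fun t => ∫ z, G (z, t) := by
    rw [Measure.volume_eq_prod] at hGint
    exact hGint.integral_prod_right
  have hcω₀ : HasCompactSupport fun t => ((ω₀ t : ℝ) : ℂ) * e2pi (-(t * T)) := by
    refine HasCompactSupport.intro (isCompact_Icc (a := -(1/2 : ℝ)) (b := 1/2)) fun t ht => ?_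
    rw [hω₀_supp t, Complex.ofReal_zero, zero_mul]
    by_contra h
    exact ht (abs_le.mp (not_lt.mp h))
  have hω₀_int : Integrable fun t => ((ω₀ t : ℝ) : ℂ) * e2pi (-(t * T)) :=
    Continuous.integrable_of_hasCompactSupport (by fun_prop) hcω₀
  rw [hprod, fourierW0, ← integral_sub hinner_int hω₀_int]
  have hslice : ∀ t, t ≠ 0 →
      ‖(∫ z, G (z, t)) - ((ω₀ t : ℝ) : ℂ) * e2pi (-(t * T))‖ ≤ ε := by
    intro t ht
    have h := hK (radialWave 1 ω₀ l t u) (contDiff_radialWave 1 hω₀_smooth l u ht)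
      (fun z hz => by simp [radialWave, hzero z t (Or.inl hz)]) C₀ (C₁ * (1 + |u|) ^ M)
      (fun z => by simpa using hC₀ l t u z hl hl2 ht) (fun z => hC₁ l t u z hl hl2 ht) y hy
    have e0 : radialWave 1 ω₀ l t u 0 = (ω₀ t : ℂ) := by
      have : ω₀ |t| = ω₀ t := by
        rcases abs_choice t with h | h <;> rw [h]
        exact hω₀_even t
      simp [radialWave, Real.sqrt_sq_eq_abs, this, e2pi]
    have e1 : ∫ z, G (z, t) =
        (∫ z, radialWave 1 ω₀ l t u z * (hFun ω y z : ℂ)) * e2pi (-(t * T)) := by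
      rw [← integral_mul_const]
      congr 1
      funext z
      simp only [hG, radialWave, Polynomial.eval_one]
      push_cast
      ring
    rw [e1, ← sub_mul, norm_mul, norm_e2pi, mul_one, ← e0]
    refine h.trans ?_
    rw [hε]
    have : C₀ + C₁ * (1 + |u|) ^ M ≤ (C₀ + C₁) * (1 + |u|) ^ M := by nlinarith
    calc _ ≤ K * ((C₀ + C₁) * (1 + |u|) ^ M) * (y ^ M / y) := by gcongr
      _ = _ := by ring
  have hout : ∀ t, 1 / 2 < |t| →
      (∫ z, G (z, t)) - ((ω₀ t : ℝ) : ℂ) * e2pi (-(t * T)) = 0 := by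
    intro t ht
    have : ∀ z, G (z, t) = 0 := fun z => hGs _ (Or.inr ht)
    simp [this, hω₀_supp t ht]
  have hind : Integrable ((Set.Icc (-(1/2) : ℝ) (1/2)).indicator fun _ => ε) :=
    (integrable_indicator_iff measurableSet_Icc).mpr (integrableOn_const (by simp))
  refine (norm_integral_le_of_norm_le hind ?_).trans (le_of_eq ?_)
  · filter_upwards [compl_mem_ae_iff.mpr (measure_singleton (0 : ℝ))] with t ht
    by_cases h : 1 / 2 < |t|
    · rw [hout t h, norm_zero]
      exact Set.indicator_nonneg (fun _ _ => hε0) t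
    · have hm : t ∈ Set.Icc (-(1 / 2) : ℝ) (1 / 2) := abs_le.mp (not_lt.mp h)
      rw [Set.indicator_of_mem hm]
      exact hslice t ht
  · rw [integral_indicator measurableSet_Icc]
    simp
    norm_num

/-- `p2` in coordinates adapted to `r`. -/
theorem p2_eq_integral_adapted (ω ω₀ : ℝ → ℝ) {Q : ℝ} (hQ : 0 < Q) {r : ℤ × ℤ} (k : ℕ) (q : ℝ)
    (w : ℝ × ℝ) {S R : ℝ} (hS : S = Q ^ ((1 : ℝ) / 2))
    (hR : R = nrm2 ((r.1 : ℝ), (r.2 : ℝ))) (hR0 : 0 < R) :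
    p2 ω ω₀ Q r k q w = ((cConst ω * S / R : ℝ) : ℂ) *
      ∫ p : ℝ × ℝ, ((ω₀ (√((S / R * p.1) ^ 2 + p.2 ^ 2)) * hFun ω (k * q / Q) p.1 : ℝ) : ℂ) *
        (e2pi (-(Q ^ 2 / R ^ 2 * dot2 w ((r.1 : ℝ), (r.2 : ℝ)) * p.1)) *
          e2pi (-(p.2 * (Q ^ ((3 : ℝ) / 2) / R * dot2 w (perp2 ((r.1 : ℝ), (r.2 : ℝ))))))) := by
  have hS0 : 0 < S := hS ▸ Real.rpow_pos_of_pos hQ _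
  have hQS : Q = S ^ 2 := by
    rw [hS, ← Real.rpow_natCast, ← Real.rpow_mul hQ.le]; norm_num
  have hQ3 : Q ^ ((3 : ℝ) / 2) = S ^ 3 := by
    rw [hS, ← Real.rpow_natCast, ← Real.rpow_mul hQ.le]; norm_num
  have hRR : R ^ 2 = (r.1 : ℝ) ^ 2 + (r.2 : ℝ) ^ 2 := by
    rw [hR, nrm2, Real.sq_sqrt (by positivity)]
  rw [hQ3]
  set a : ℝ := S ^ 4 / R ^ 2
  set b : ℝ := S ^ 3 / R
  have hdet : (a * r.1) * (-(b * r.1)) - (b * r.2) * (a * r.2) = -(S ^ 7 / R) := by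
    calc _ = -(a * b * R ^ 2) := by rw [hRR]; ring
      _ = _ := by simp only [a, b]; field_simp
  have hdet0 : (a * r.1) * (-(b * r.1)) - (b * r.2) * (a * r.2) ≠ 0 := by
    rw [hdet]
    exact neg_ne_zero.mpr (by positivity)
  have key := integral_comp_linear_prod (fun x : ℝ × ℝ =>
    (((ω₀ (nrm2 x / S ^ 3) *
      hFun ω ((k : ℝ) * q / Q) (((r.1 : ℝ) * x.1 + (r.2 : ℝ) * x.2) / Q ^ 2)) : ℝ) : ℂ) *
      e2pi (-(dot2 w x))) hdet0
  rw [hdet, abs_neg, abs_of_pos (by positivity)] at key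
  have e : ∀ p : ℝ × ℝ, (fun x : ℝ × ℝ => (((ω₀ (nrm2 x / S ^ 3) *
      hFun ω ((k : ℝ) * q / Q) (((r.1 : ℝ) * x.1 + (r.2 : ℝ) * x.2) / Q ^ 2)) : ℝ) : ℂ) *
      e2pi (-(dot2 w x))) (a * r.1 * p.1 + b * r.2 * p.2, a * r.2 * p.1 + -(b * r.1) * p.2) =
      ((ω₀ (√((S / R * p.1) ^ 2 + p.2 ^ 2)) * hFun ω (k * q / Q) p.1 : ℝ) : ℂ) *
        (e2pi (-(Q ^ 2 / R ^ 2 * dot2 w ((r.1 : ℝ), (r.2 : ℝ)) * p.1)) *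
          e2pi (-(p.2 * (S ^ 3 / R * dot2 w (perp2 ((r.1 : ℝ), (r.2 : ℝ))))))) := by
    intro p
    have e1 : nrm2 (a * r.1 * p.1 + b * r.2 * p.2, a * r.2 * p.1 + -(b * r.1) * p.2) / S ^ 3 =
        √((S / R * p.1) ^ 2 + p.2 ^ 2) := by
      rw [div_eq_iff (by positivity), nrm2]
      rw [show √((S / R * p.1) ^ 2 + p.2 ^ 2) * S ^ 3 =
        √(((S / R * p.1) ^ 2 + p.2 ^ 2) * (S ^ 3) ^ 2) by
          rw [Real.sqrt_mul (by positivity), Real.sqrt_sq (by positivity)]]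
      congr 1
      calc _ = (a ^ 2 * p.1 ^ 2 + b ^ 2 * p.2 ^ 2) * R ^ 2 := by rw [hRR]; ring
        _ = _ := by simp only [a, b]; field_simp
    have e2 : ((r.1 : ℝ) * (a * r.1 * p.1 + b * r.2 * p.2) +
        (r.2 : ℝ) * (a * r.2 * p.1 + -(b * r.1) * p.2)) / Q ^ 2 = p.1 := by
      rw [div_eq_iff (by positivity)]
      calc _ = a * R ^ 2 * p.1 := by rw [hRR]; ring
        _ = _ := by rw [hQS]; simp only [a]; field_simp
    have e3 : -(dot2 w (a * r.1 * p.1 + b * r.2 * p.2, a * r.2 * p.1 + -(b * r.1) * p.2)) =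
        -(Q ^ 2 / R ^ 2 * dot2 w ((r.1 : ℝ), (r.2 : ℝ)) * p.1) +
          -(p.2 * (S ^ 3 / R * dot2 w (perp2 ((r.1 : ℝ), (r.2 : ℝ))))) := by
      simp only [dot2, perp2, a, b, hQS]
      ring
    simp only [e1, e2, e3, e2pi_add]
  simp only [e] at key
  rw [key, p2, hQ3, ← mul_assoc, ← Complex.ofReal_mul]
  congr 2
  rw [hQS]
  field_simp

/-- asymptotic evaluation of `p_{2,r,k,q}` (Lemma 3.6). -/
theorem statement8
    (ω : ℝ → ℝ) (hω_smooth : ContDiff ℝ (⊤ : ℕ∞) ω)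
    (hω_nonneg : ∀ x, 0 ≤ ω x)
    (hω_supp : Function.support ω ⊆ Set.Ioo (1/2 : ℝ) 1)
    (hω_int : ∫ x : ℝ, ω x = 1)
    (ω₀ : ℝ → ℝ) (hω₀_smooth : ContDiff ℝ (⊤ : ℕ∞) ω₀)
    (hω₀_nonneg : ∀ x, 0 ≤ ω₀ x)
    (hω₀_even : ∀ x, ω₀ (-x) = ω₀ x)
    (hω₀_supp : Function.support ω₀ ⊆ Set.Ioo (-(1/2) : ℝ) (1/2))
    (hω₀_one : ω₀ 0 = 1)
    (δ N : ℝ) (hδ : 0 < δ) (hN : 0 < N) :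
    ∃ C : ℝ, 0 < C ∧ ∀ Q : ℝ, 1 ≤ Q → ∀ r : ℤ × ℤ,
      Q ^ ((1 : ℝ) / 2) / 2 ≤ nrm2 ((r.1 : ℝ), (r.2 : ℝ)) →
      nrm2 ((r.1 : ℝ), (r.2 : ℝ)) ≤ Q ^ ((1 : ℝ) / 2) →
      ∀ k q : ℕ, 1 ≤ k → 1 ≤ q → (k : ℝ) * q ≤ Q →
      ∀ w : ℝ × ℝ,
        (k : ℝ) * q * (Q * |dot2 w ((r.1 : ℝ), (r.2 : ℝ))| + 1) ≤ Q ^ (1 - δ) →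
        ‖p2 ω ω₀ Q r k (q : ℝ) w -
          ((cConst ω * Q ^ ((1 : ℝ) / 2) / nrm2 ((r.1 : ℝ), (r.2 : ℝ)) : ℝ) : ℂ) *
            fourierW0 ω₀ ((Q ^ ((3 : ℝ) / 2) / nrm2 ((r.1 : ℝ), (r.2 : ℝ))) *
              dot2 w (perp2 ((r.1 : ℝ), (r.2 : ℝ))))‖
          ≤ C * Q ^ (-N) := by
  have hω₀_supp' : ∀ x, 1 / 2 < |x| → ω₀ x = 0 := by
    intro x hx
    by_contra hne
    have h := hω₀_supp (Function.mem_support.mpr hne)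
    exact absurd (abs_lt.mpr ⟨h.1, h.2⟩) (not_lt.mpr hx.le)
  set M : ℕ := max 2 ⌈(N + 1) / δ⌉₊
  have hM : 2 ≤ M := le_max_left _ _
  have hδM : N + 1 ≤ δ * M := by
    have h : (N + 1) / δ ≤ M :=
      (Nat.le_ceil _).trans (by exact_mod_cast le_max_right _ _)
    rw [div_le_iff₀ hδ] at h
    linarith
  obtain ⟨K, hK0, hK⟩ := exists_norm_integral_radial_mul_hFun_sub_le hω_smooth hω_nonneg
    hω_supp hω_int hω₀_smooth hω₀_even hω₀_supp' hM
  refine ⟨|cConst ω| * 2 * (K * 4 ^ M) + 1, by positivity, ?_⟩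
  intro Q hQ r hr₁ hr₂ k q hk hq hkq w hw
  have hQ0 : 0 < Q := by linarith
  obtain ⟨S, hS⟩ : ∃ S, S = Q ^ ((1 : ℝ) / 2) := ⟨_, rfl⟩
  obtain ⟨R, hR⟩ : ∃ R, R = nrm2 ((r.1 : ℝ), (r.2 : ℝ)) := ⟨_, rfl⟩
  rw [← hS, ← hR] at hr₁ hr₂ ⊢
  have hS0 : 0 < S := hS ▸ Real.rpow_pos_of_pos hQ0 _
  have hR0 : 0 < R := by linarith
  have hQS : Q = S ^ 2 := by
    rw [hS, ← Real.rpow_natCast, ← Real.rpow_mul hQ0.le]; norm_num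
  rw [p2_eq_integral_adapted ω ω₀ hQ0 k q w hS hR hR0, ← mul_sub, norm_mul, Complex.norm_real]
  set a : ℝ := dot2 w ((r.1 : ℝ), (r.2 : ℝ))
  set u : ℝ := Q ^ 2 / R ^ 2 * a
  set y : ℝ := (k : ℝ) * q / Q
  have hk' : (1 : ℝ) ≤ k := by exact_mod_cast hk
  have hq' : (1 : ℝ) ≤ q := by exact_mod_cast hq
  have hkq1 : (1 : ℝ) ≤ (k : ℝ) * q := one_le_mul_of_one_le_of_one_le hk' hq'
  have hy0 : 0 < y := by positivity
  have hl1 : 1 ≤ S / R := (one_le_div hR0).mpr hr₂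
  have hl2 : S / R ≤ 2 := (div_le_iff₀ hR0).mpr (by linarith)
  have hu : 1 + |u| ≤ 4 * (Q * |a| + 1) := by
    have h : Q ^ 2 / R ^ 2 ≤ 4 * Q := by
      rw [div_le_iff₀ (by positivity)]
      have : Q ≤ 4 * R ^ 2 := by rw [hQS]; nlinarith
      nlinarith
    have h' : |u| ≤ 4 * Q * |a| := by
      rw [abs_mul, abs_of_nonneg (by positivity : 0 ≤ Q ^ 2 / R ^ 2)]
      exact mul_le_mul_of_nonneg_right h (abs_nonneg a)
    linarith
  have huy : (1 + |u|) * y ≤ 4 * Q ^ (-δ) := by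
    have h : (Q * |a| + 1) * y ≤ Q ^ (-δ) := by
      have e : (Q * |a| + 1) * y = (k : ℝ) * q * (Q * |a| + 1) / Q := by
        simp only [y]; ring
      rw [e, div_le_iff₀ hQ0, ← Real.rpow_add_one hQ0.ne', neg_add_eq_sub]
      exact hw
    nlinarith [mul_le_mul_of_nonneg_right hu hy0.le]
  have hyQ : 1 / y ≤ Q := by
    rw [div_le_iff₀ hy0, mul_div_cancel₀ _ hQ0.ne']
    exact hkq1
  have hpow : (1 + |u|) ^ M * (y ^ M / y) ≤ 4 ^ M * Q ^ (-N) := by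
    calc (1 + |u|) ^ M * (y ^ M / y) = ((1 + |u|) * y) ^ M * (1 / y) := by
          rw [mul_pow]; ring
      _ ≤ (4 * Q ^ (-δ)) ^ M * Q := by gcongr
      _ = 4 ^ M * Q ^ (-δ * M + 1) := by
          rw [mul_pow, ← Real.rpow_natCast (Q ^ (-δ)), ← Real.rpow_mul hQ0.le,
            Real.rpow_add_one hQ0.ne']
          ring
      _ ≤ 4 ^ M * Q ^ (-N) := by
          gcongr
          linarith
  have hc : ‖cConst ω * S / R‖ ≤ |cConst ω| * 2 := by
    rw [mul_div_assoc, norm_mul, Real.norm_eq_abs, Real.norm_eq_abs,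
      abs_of_nonneg (by positivity : 0 ≤ S / R)]
    gcongr
  have hQN : 0 ≤ Q ^ (-N) := Real.rpow_nonneg hQ0.le _
  calc _ ≤ |cConst ω| * 2 * (K * (1 + |u|) ^ M * (y ^ M / y)) :=
        mul_le_mul hc (hK _ u _ y hl1 hl2 hy0) (norm_nonneg _) (by positivity)
    _ ≤ |cConst ω| * 2 * (K * (4 ^ M * Q ^ (-N))) := by
        rw [mul_assoc K]
        gcongr
    _ ≤ (|cConst ω| * 2 * (K * 4 ^ M) + 1) * Q ^ (-N) := by
        nlinarith
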